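/- Let γ=(B,M,S,A,Â) be a market with middlemen and γ*=(B,S,A*) the associated two-sided assignment market. Then { (x;y;z)∈Core(v_γ) : y=0 } = { (x;0;z)∈R^B×R^M×R^S : (x;z)∈Core(w_{γ*}) }; that is, the facet of Core(v_γ) where all middlemen receive zero payoff coincides with the embedded core of the assignment game w_{γ*}. -/

import Mathlib

/-!
Matching markets with middlemen (Atay, Bahel, Solymosi).

Players are of three sorts: buyers `B`, middlemen `M`, sellers `S`
(three disjoint nonempty finite types); the player set is `Player B M S = B ⊕ M ⊕ S`.
An (functional representation of a) `T`-matching assigns to each buyer either nothing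
(the buyer is single), a seller (direct trade), or a middleman together with a seller
(mediated trade); distinct buyers get distinct sellers, and all agents involved lie in `T`.
A middleman may mediate several trades.
-/

open scoped Classical

noncomputable section

/-- The set of players of a market with middlemen: buyers `B`, middlemen `M`, sellers `S`. -/
abbrev Player (B M S : Type*) := B ⊕ M ⊕ S

/-- Functional representation of a matching in the market with middlemen: each buyer is
unmatched (`none`), matched directly to a seller (`some (none, k)`), or matched to a seller
through a middleman (`some (some j, k)`). -/
abbrev MMatch (B M S : Type*) := B → Option (Option M × S)

namespace Middlemen

variable {B M S : Type*}

/-- A buyer as a player. -/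
def buyer (i : B) : Player B M S := Sum.inl i

/-- A middleman as a player. -/
def mid (j : M) : Player B M S := Sum.inr (Sum.inl j)

/-- A seller as a player. -/
def seller (k : S) : Player B M S := Sum.inr (Sum.inr k)

/-- `f` is a `T`-matching in the market with middlemen: every basic coalition used by `f`
is contained in `T` and no seller is matched to two distinct buyers.  (Buyers, middlemen
and sellers of `T` not appearing in any trade are singletons of the matching.) -/
def IsMatching (T : Finset (Player B M S)) (f : MMatch B M S) : Prop :=
  (∀ i o k, f i = some (o, k) →
      buyer i ∈ T ∧ seller k ∈ T ∧ ∀ j, o = some j → mid j ∈ T) ∧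
  (∀ i i' o o' k, f i = some (o, k) → f i' = some (o', k) → i = i')

variable [Fintype B] [Fintype M] [Fintype S]

/-- The value `Σ_{(i,k)∈μ} a_{ik} + Σ_{(i,j,k)∈μ} â_{ijk}` of a matching in the market
with middlemen with direct-trade surplus matrix `A` and mediated-trade surpluses `Ah`. -/
def mval (A : B → S → ℝ) (Ah : B → M → S → ℝ) (f : MMatch B M S) : ℝ :=
  ∑ i, (match f i with
    | none => 0
    | some (none, k) => A i k
    | some (some j, k) => Ah i j k)

/-- The TU game `v_γ` associated with the market with middlemen `γ = (B,M,S,A,Ah)`: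
the worth of a coalition `T` is the maximal value of a `T`-matching. -/
def vGame (A : B → S → ℝ) (Ah : B → M → S → ℝ) (T : Finset (Player B M S)) : ℝ :=
  sSup { r | ∃ f : MMatch B M S, IsMatching T f ∧ r = mval A Ah f }

/-- `g` is a matching of the coalition `R` in a two-sided assignment market. -/
def IsMatching2 (R : Finset (B ⊕ S)) (g : B → Option S) : Prop :=
  (∀ i k, g i = some k → Sum.inl i ∈ R ∧ Sum.inr k ∈ R) ∧
  (∀ i i' k, g i = some k → g i' = some k → i = i')

/-- The value of a two-sided matching with valuation matrix `As`. -/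
def m2val (As : B → S → ℝ) (g : B → Option S) : ℝ :=
  ∑ i, (match g i with
    | none => 0
    | some k => As i k)

/-- The assignment game `w_{γ*}` of the two-sided assignment market `(B,S,As)`. -/
def wGame (As : B → S → ℝ) (R : Finset (B ⊕ S)) : ℝ :=
  sSup { r | ∃ g : B → Option S, IsMatching2 R g ∧ r = m2val As g }

/-- The matrix `A*` of the associated two-sided assignment market:
`a*_{ik} = max_{j ∈ M} â_{ijk}`. -/
def Astar [Nonempty M] (Ah : B → M → S → ℝ) (i : B) (k : S) : ℝ :=
  Finset.univ.sup' Finset.univ_nonempty fun j => Ah i j k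

/-- The two-sided matching `μ*` induced by a matching `μ` of the market with middlemen:
keep all matched buyer–seller pairs (dropping the middlemen). -/
def star (f : MMatch B M S) : B → Option S := fun i => (f i).map Prod.snd

/-- `m(i,k)`: the lowest-indexed middleman `j` maximizing `â_{ijk}`. -/
def bestMid [Nonempty M] [LinearOrder M] (Ah : B → M → S → ℝ) (i : B) (k : S) : M :=
  (Finset.univ.filter fun j => ∀ j' : M, Ah i j' k ≤ Ah i j k).min' (by
    obtain ⟨j, -, hj⟩ := Finset.exists_max_image (Finset.univ : Finset M)
      (fun j => Ah i j k) Finset.univ_nonempty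
    exact ⟨j, Finset.mem_filter.mpr ⟨Finset.mem_univ _, fun j' => hj j' (Finset.mem_univ _)⟩⟩)

/-- The matching `σ^△` of the market with middlemen induced by a two-sided matching `σ`:
each matched pair `{i,k}` of `σ` trades through the best middleman `m(i,k)`
(and every other middleman is a singleton). -/
def triangle [Nonempty M] [LinearOrder M] (Ah : B → M → S → ℝ) (g : B → Option S) :
    MMatch B M S :=
  fun i => (g i).map fun k => (some (bestMid Ah i k), k)

/-- The core of a TU game on the finite player set `P`. -/
def core {P : Type*} [Fintype P] (v : Finset P → ℝ) : Set (P → ℝ) :=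
  { x | ∑ t, x t = v Finset.univ ∧ ∀ T : Finset P, v T ≤ ∑ t ∈ T, x t }

/-- Augment a payoff vector of the two-sided market with zero payoffs to all middlemen. -/
def aug (xz : B ⊕ S → ℝ) : Player B M S → ℝ := fun t =>
  match t with
  | Sum.inl i => xz (Sum.inl i)
  | Sum.inr (Sum.inl _) => 0
  | Sum.inr (Sum.inr k) => xz (Sum.inr k)

/-- Restrict a payoff vector of the market with middlemen to the buyers and sellers. -/
def restrictBS (X : Player B M S → ℝ) : B ⊕ S → ℝ := fun t =>
  match t with
  | Sum.inl i => X (buyer i)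
  | Sum.inr k => X (seller k)

/-- The set `T ∩ (B ∪ S)` of buyers and sellers of a coalition `T`. -/
def bsPart (T : Finset (Player B M S)) : Finset (B ⊕ S) :=
  Finset.univ.filter fun t =>
    match t with
    | Sum.inl i => buyer i ∈ T
    | Sum.inr k => (seller k : Player B M S) ∈ T

/-- The coalition `R ∪ M` consisting of the buyers and sellers of `R` together with
all middlemen. -/
def withAllMid (R : Finset (B ⊕ S)) : Finset (Player B M S) :=
  Finset.univ.filter fun t =>
    match t with
    | Sum.inl i => Sum.inl i ∈ R
    | Sum.inr (Sum.inl _) => True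
    | Sum.inr (Sum.inr k) => Sum.inr k ∈ R

end Middlemen

namespace Middlemen

/-!
A middleman may serve any number of trades, so matching through middlemen is no more constrained
than two-sided matching. Forgetting the middlemen turns a matching of `T` into a two-sided matching
of `T ∩ (B ∪ S)` of at least the same value, and routing every pair of a two-sided matching of `R`
through its best middleman gives a matching of `R ∪ M` of the same value. Hence
`v_γ(T) ≤ w_γ*(T ∩ (B ∪ S))` and `w_γ*(R) ≤ v_γ(R ∪ M)`. When middlemen are paid zero, `T` and
`T ∩ (B ∪ S)` receive the same total, and so do `R ∪ M` and `R`, so these two inequalities carry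
the core constraints of each game over to the other.
-/

section Coalitions

variable {B M S : Type*} [Fintype B] [Fintype S]

@[simp]
lemma inl_mem_bsPart {T : Finset (Player B M S)} {i : B} :
    Sum.inl i ∈ bsPart T ↔ buyer i ∈ T := by
  simp [bsPart]

@[simp]
lemma inr_mem_bsPart {T : Finset (Player B M S)} {k : S} :
    Sum.inr k ∈ bsPart T ↔ seller k ∈ T := by
  simp [bsPart]

@[simp]
lemma bsPart_univ [Fintype M] :
    bsPart (Finset.univ : Finset (Player B M S)) = Finset.univ := by
  ext (i | k) <;> simp

variable [Fintype M]

@[simp]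
lemma buyer_mem_withAllMid {R : Finset (B ⊕ S)} {i : B} :
    (buyer i : Player B M S) ∈ withAllMid R ↔ Sum.inl i ∈ R := by
  simp [withAllMid, buyer]

@[simp]
lemma mid_mem_withAllMid (R : Finset (B ⊕ S)) (j : M) :
    (mid j : Player B M S) ∈ withAllMid R := by
  simp [withAllMid, mid]

@[simp]
lemma seller_mem_withAllMid {R : Finset (B ⊕ S)} {k : S} :
    (seller k : Player B M S) ∈ withAllMid R ↔ Sum.inr k ∈ R := by
  simp [withAllMid, seller]

@[simp]
lemma bsPart_withAllMid (R : Finset (B ⊕ S)) :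
    bsPart (withAllMid R : Finset (Player B M S)) = R := by
  ext (i | k) <;> simp

@[simp]
lemma withAllMid_univ :
    withAllMid (Finset.univ : Finset (B ⊕ S)) = (Finset.univ : Finset (Player B M S)) := by
  ext (i | j | k) <;> simp [withAllMid]

end Coalitions

section Payoffs

variable {B M S : Type*}

lemma aug_restrictBS {X : Player B M S → ℝ} (hX : ∀ j, X (mid j) = 0) :
    aug (restrictBS X) = X := by
  funext t
  rcases t with i | j | k
  · rfl
  · exact (hX j).symm
  · rfl

variable [Fintype B] [Fintype S]

lemma sum_aug (xz : B ⊕ S → ℝ) (T : Finset (Player B M S)) :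
    ∑ t ∈ T, aug xz t = ∑ t ∈ bsPart T, xz t := by
  symm
  refine Finset.sum_of_injOn (Sum.map id Sum.inr) ?_ ?_ ?_ ?_
  · exact (Function.injective_id.sumMap Sum.inr_injective).injOn
  · rintro (i | k) ht
    · exact inl_mem_bsPart.1 ht
    · exact inr_mem_bsPart.1 ht
  · rintro (i | j | k) ht hnotin
    · exact (hnotin ⟨Sum.inl i, inl_mem_bsPart.2 ht, rfl⟩).elim
    · rfl
    · exact (hnotin ⟨Sum.inr k, inr_mem_bsPart.2 ht, rfl⟩).elim
  · rintro (i | k) - <;> rfl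

lemma aug_mem_core_iff [Fintype M] {v : Finset (Player B M S) → ℝ} {w : Finset (B ⊕ S) → ℝ}
    (hvw : ∀ T, v T ≤ w (bsPart T)) (hwv : ∀ R, w R ≤ v (withAllMid R)) (xz : B ⊕ S → ℝ) :
    aug xz ∈ core v ↔ xz ∈ core w := by
  have grand_worth : v Finset.univ = w Finset.univ :=
    le_antisymm (by simpa using hvw Finset.univ) (by simpa using hwv Finset.univ)
  simp only [core, Set.mem_ofPred_eq, sum_aug, bsPart_univ, grand_worth]
  refine and_congr_right fun _ => ⟨fun stable R => ?_, fun stable T => ?_⟩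
  · calc w R ≤ v (withAllMid R) := hwv R
      _ ≤ ∑ t ∈ bsPart (withAllMid R), xz t := stable _
      _ = ∑ t ∈ R, xz t := by rw [bsPart_withAllMid]
  · exact (hvw T).trans (stable _)

end Payoffs

section Worth

variable {B M S : Type*} [Fintype B]

lemma IsMatching.mval_le_vGame [Finite M] [Finite S] {A : B → S → ℝ} {Ah : B → M → S → ℝ}
    {T : Finset (Player B M S)} {f : MMatch B M S} (hf : IsMatching T f) :
    mval A Ah f ≤ vGame A Ah T := by
  refine le_csSup ((Set.finite_range (mval A Ah)).subset ?_).bddAbove ⟨f, hf, rfl⟩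
  rintro _ ⟨f, -, rfl⟩
  exact ⟨f, rfl⟩

lemma vGame_le {A : B → S → ℝ} {Ah : B → M → S → ℝ} {T : Finset (Player B M S)} {c : ℝ}
    (h : ∀ f, IsMatching T f → mval A Ah f ≤ c) : vGame A Ah T ≤ c := by
  refine csSup_le ⟨_, fun _ => none, ⟨by simp, by simp⟩, rfl⟩ ?_
  rintro _ ⟨f, hf, rfl⟩
  exact h f hf

lemma IsMatching2.m2val_le_wGame [Finite S] {As : B → S → ℝ} {R : Finset (B ⊕ S)}
    {g : B → Option S} (hg : IsMatching2 R g) : m2val As g ≤ wGame As R := by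
  refine le_csSup ((Set.finite_range (m2val As)).subset ?_).bddAbove ⟨g, hg, rfl⟩
  rintro _ ⟨g, -, rfl⟩
  exact ⟨g, rfl⟩

lemma wGame_le {As : B → S → ℝ} {R : Finset (B ⊕ S)} {c : ℝ}
    (h : ∀ g, IsMatching2 R g → m2val As g ≤ c) : wGame As R ≤ c := by
  refine csSup_le ⟨_, fun _ => none, ⟨by simp, by simp⟩, rfl⟩ ?_
  rintro _ ⟨g, hg, rfl⟩
  exact h g hg

end Worth

section DroppingMiddlemen

variable {B M S : Type*}

lemma star_eq_some {f : MMatch B M S} {i : B} {k : S} :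
    star f i = some k ↔ ∃ o, f i = some (o, k) := by
  simp [star]

lemma IsMatching.star [Fintype B] [Fintype S] {T : Finset (Player B M S)} {f : MMatch B M S}
    (hf : IsMatching T f) : IsMatching2 (bsPart T) (star f) := by
  refine ⟨fun i k hik => ?_, fun i i' k hik hi'k => ?_⟩
  · obtain ⟨o, ho⟩ := star_eq_some.1 hik
    obtain ⟨hi, hk, -⟩ := hf.1 i o k ho
    exact ⟨inl_mem_bsPart.2 hi, inr_mem_bsPart.2 hk⟩
  · obtain ⟨o, ho⟩ := star_eq_some.1 hik
    obtain ⟨o', ho'⟩ := star_eq_some.1 hi'k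
    exact hf.2 i i' o o' k ho ho'

variable [Fintype M] [Nonempty M]

lemma le_Astar (Ah : B → M → S → ℝ) (i : B) (j : M) (k : S) : Ah i j k ≤ Astar Ah i k :=
  Finset.le_sup' (fun j => Ah i j k) (Finset.mem_univ j)

variable [Fintype B]

lemma mval_le_m2val_star {A : B → S → ℝ} {Ah : B → M → S → ℝ}
    (hA : ∀ i k, A i k ≤ Astar Ah i k) (f : MMatch B M S) :
    mval A Ah f ≤ m2val (Astar Ah) (star f) := by
  refine Finset.sum_le_sum fun i _ => ?_
  rcases hfi : f i with _ | ⟨_ | j, k⟩ <;> simp [star, hfi, hA, le_Astar]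

lemma vGame_le_wGame_bsPart [Fintype S] {A : B → S → ℝ} {Ah : B → M → S → ℝ}
    (hA : ∀ i k, A i k ≤ Astar Ah i k) (T : Finset (Player B M S)) :
    vGame A Ah T ≤ wGame (Astar Ah) (bsPart T) :=
  vGame_le fun f hf => (mval_le_m2val_star hA f).trans hf.star.m2val_le_wGame

end DroppingMiddlemen

section InsertingMiddlemen

variable {B M S : Type*} [Fintype M] [Nonempty M]

lemma Ah_bestMid [LinearOrder M] (Ah : B → M → S → ℝ) (i : B) (k : S) :
    Ah i (bestMid Ah i k) k = Astar Ah i k := by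
  have bestMid_mem : bestMid Ah i k ∈ Finset.univ.filter fun j => ∀ j', Ah i j' k ≤ Ah i j k :=
    Finset.min'_mem _ _
  exact le_antisymm (le_Astar Ah i _ k)
    (Finset.sup'_le _ _ fun j _ => (Finset.mem_filter.1 bestMid_mem).2 j)

lemma triangle_eq_some [LinearOrder M] {Ah : B → M → S → ℝ} {g : B → Option S} {i : B}
    {o : Option M} {k : S} :
    triangle Ah g i = some (o, k) ↔ g i = some k ∧ some (bestMid Ah i k) = o := by
  simp only [triangle, Option.map_eq_some_iff, Prod.mk.injEq]
  grind

variable [Fintype B]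

lemma IsMatching2.triangle [LinearOrder M] [Fintype S] (Ah : B → M → S → ℝ)
    {R : Finset (B ⊕ S)} {g : B → Option S} (hg : IsMatching2 R g) :
    IsMatching (withAllMid R) (triangle Ah g) := by
  refine ⟨fun i o k hik => ?_, fun i i' o o' k hik hi'k => ?_⟩
  · obtain ⟨hi, hk⟩ := hg.1 i k (triangle_eq_some.1 hik).1
    exact ⟨buyer_mem_withAllMid.2 hi, seller_mem_withAllMid.2 hk,
      fun j _ => mid_mem_withAllMid R j⟩
  · exact hg.2 i i' k (triangle_eq_some.1 hik).1 (triangle_eq_some.1 hi'k).1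

lemma mval_triangle [LinearOrder M] (A : B → S → ℝ) (Ah : B → M → S → ℝ)
    (g : B → Option S) : mval A Ah (triangle Ah g) = m2val (Astar Ah) g := by
  refine Finset.sum_congr rfl fun i _ => ?_
  rcases hgi : g i with _ | k <;> simp [triangle, hgi, Ah_bestMid]

lemma wGame_le_vGame_withAllMid [Fintype S] (A : B → S → ℝ) (Ah : B → M → S → ℝ)
    (R : Finset (B ⊕ S)) : wGame (Astar Ah) R ≤ vGame A Ah (withAllMid R) := by
  -- `bestMid` breaks ties by an order on `M`; any order will do.
  let _ : LinearOrder M := linearOrderOfSTO WellOrderingRel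
  refine wGame_le fun g hg => ?_
  rw [← mval_triangle A]
  exact (hg.triangle Ah).mval_le_vGame

end InsertingMiddlemen

theorem core_zero_facet_eq_general
    {B M S : Type*} [Fintype B] [Fintype M] [Fintype S] [Nonempty M]
    (A : B → S → ℝ) (Ah : B → M → S → ℝ) (hA : ∀ i k, A i k ≤ Astar Ah i k) :
    { X : Player B M S → ℝ | X ∈ core (vGame A Ah) ∧ ∀ j : M, X (mid j) = 0 } =
      { X : Player B M S → ℝ | ∃ xz ∈ core (wGame (Astar Ah)), X = aug xz } := by
  have aug_mem_core (xz : B ⊕ S → ℝ) :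
      aug xz ∈ core (vGame A Ah) ↔ xz ∈ core (wGame (Astar Ah)) :=
    aug_mem_core_iff (vGame_le_wGame_bsPart hA) (wGame_le_vGame_withAllMid A Ah) xz
  ext X
  constructor
  · rintro ⟨hX, hmid⟩
    rw [← aug_restrictBS hmid, aug_mem_core] at hX
    exact ⟨restrictBS X, hX, (aug_restrictBS hmid).symm⟩
  · rintro ⟨xz, hxz, rfl⟩
    exact ⟨(aug_mem_core xz).2 hxz, fun _ => rfl⟩

/-- the facet of `Core(v_γ)` where all middlemen receive zero payoff
coincides with the embedded core of the assignment game `w_γ*`. -/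
theorem core_zero_facet_eq
    {B M S : Type*} [Fintype B] [Fintype M] [Fintype S]
    [Nonempty B] [Nonempty M] [Nonempty S]
    (A : B → S → ℝ) (Ah : B → M → S → ℝ)
    (hA : ∀ i k, 0 ≤ A i k) (hAh : ∀ i j k, A i k ≤ Ah i j k) :
    { X : Player B M S → ℝ | X ∈ core (vGame A Ah) ∧ ∀ j : M, X (mid j) = 0 } =
      { X : Player B M S → ℝ | ∃ xz ∈ core (wGame (Astar Ah)), X = aug xz } :=
  core_zero_facet_eq_general A Ah fun i k =>
    (hAh i (Classical.arbitrary M) k).trans (le_Astar Ah i _ k)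

end Middlemen
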